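/- Let ν > 0, T > 0, let u : ℝ³ × [0,T] → ℝ³ be C^∞ with u and ∇u bounded, and let A : ℝ³ × [0,T] → ℝ³ be a C^∞ solution of ∂A/∂t + (u·∇)A − νΔA = 0 with A(x,0) = x whose second spatial derivatives are bounded on ℝ³ × [0,T]. Suppose Q : ℝ³ × [0,T] → M₃(ℝ) is C^∞, bounded together with its spatial gradient ∇Q, satisfies Q(x,0) = I, and solves ∂Q/∂t + (u·∇)Q − νΔQ = (∇u)Q + 2ν Σ_{k=1}^{3} Q (∂_k ∇A)(∂_k Q) on ℝ³ × (0,T), where (∇u)_{ij} = ∂u_i/∂x_j, (∇A)_{ij} = ∂A_i/∂x_j, and products are matrix products. Then ∇A(x,t) Q(x,t) = I for all (x,t) ∈ ℝ³ × [0,T]; that is, Q is pointwise the inverse of the Jacobian matrix ∇A. -/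

import Mathlib

open Set Filter

noncomputable section

/-- Spatial partial derivative in the `j`-th coordinate direction. -/
def pd (j : Fin 3) (φ : (Fin 3 → ℝ) → ℝ) (x : Fin 3 → ℝ) : ℝ :=
  fderiv ℝ φ x (Pi.single j 1)

/-- Spatial Laplacian. -/
def lap (φ : (Fin 3 → ℝ) → ℝ) (x : Fin 3 → ℝ) : ℝ :=
  ∑ j, pd j (fun y => pd j φ y) x

/-- Spatial Jacobian matrix of a map `ℝ³ → ℝ³`: entries `∂fᵢ/∂xⱼ`. -/
def jacMat (f : (Fin 3 → ℝ) → (Fin 3 → ℝ)) (x : Fin 3 → ℝ) :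
    Matrix (Fin 3) (Fin 3) ℝ :=
  fun i j => pd j (fun y => f y i) x

/-- `f` is smooth up to the boundary of the space-time strip `ℝ³ × [0, T]`. -/
def SmoothOnStrip (T : ℝ) (f : (Fin 3 → ℝ) → ℝ → ℝ) : Prop :=
  ContDiffOn ℝ (⊤ : ℕ∞) (fun q : (Fin 3 → ℝ) × ℝ => f q.1 q.2) (univ ×ˢ Icc 0 T)

/-- The parabolic operator `∂ₜ + u·∇ - νΔ` acting on scalar functions. -/
def parab (ν : ℝ) (u : (Fin 3 → ℝ) → ℝ → (Fin 3 → ℝ)) (f : (Fin 3 → ℝ) → ℝ → ℝ)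
    (x : Fin 3 → ℝ) (t : ℝ) : ℝ :=
  deriv (fun s => f x s) t + (∑ k, u x t k * pd k (fun y => f y t) x)
    - ν * lap (fun y => f y t) x

lemma two_le_coe_top : (2 : WithTop ℕ∞) ≤ ((⊤ : ℕ∞) : WithTop ℕ∞) := by
  exact WithTop.coe_le_coe.2 (le_top : (2 : ℕ∞) ≤ ⊤)

section PartialDerivatives

variable {φ ψ : (Fin 3 → ℝ) → ℝ} {x : Fin 3 → ℝ}

lemma pd_add (j : Fin 3) (hφ : Differentiable ℝ φ) (hψ : Differentiable ℝ ψ) :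
    pd j (fun y => φ y + ψ y) x = pd j φ x + pd j ψ x := by
  simp [pd, fderiv_fun_add (hφ x) (hψ x)]

lemma pd_mul (j : Fin 3) (hφ : Differentiable ℝ φ) (hψ : Differentiable ℝ ψ) :
    pd j (fun y => φ y * ψ y) x = pd j φ x * ψ x + φ x * pd j ψ x := by
  simp [pd, fderiv_fun_mul (hφ x) (hψ x)]
  ring

lemma pd_sum {ι : Type*} [Fintype ι] {F : ι → (Fin 3 → ℝ) → ℝ} (j : Fin 3)
    (hF : ∀ i, Differentiable ℝ (F i)) :
    pd j (fun y => ∑ i, F i y) x = ∑ i, pd j (F i) x := by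
  simp [pd, fderiv_fun_sum fun i _ => hF i x]

lemma pd_const (j : Fin 3) (c : ℝ) : pd j (fun _ => c) x = 0 := by
  simp [pd]

lemma pd_coord (j i : Fin 3) : pd j (fun y => y i) x = if i = j then 1 else 0 := by
  have h : HasFDerivAt (fun y : Fin 3 → ℝ => y i)
      (ContinuousLinearMap.proj (R := ℝ) (φ := fun _ : Fin 3 => ℝ) i) x :=
    (ContinuousLinearMap.proj (R := ℝ) (φ := fun _ : Fin 3 => ℝ) i).hasFDerivAt
  simp [pd, h.fderiv, Pi.single_apply]

lemma contDiff_pd (j : Fin 3) (hφ : ContDiff ℝ (⊤ : ℕ∞) φ) :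
    ContDiff ℝ (⊤ : ℕ∞) (pd j φ) :=
  (hφ.fderiv_right (m := (⊤ : ℕ∞)) (by simp)).clm_apply contDiff_const

lemma pd_comm (j k : Fin 3) (hφ : ContDiff ℝ (⊤ : ℕ∞) φ) :
    pd j (pd k φ) x = pd k (pd j φ) x := by
  have hd : DifferentiableAt ℝ (fderiv ℝ φ) x :=
    (hφ.fderiv_right (m := (⊤ : ℕ∞)) (by simp)).differentiable (by simp) x
  have key : ∀ a b : Fin 3, pd a (pd b φ) x
      = fderiv ℝ (fderiv ℝ φ) x (Pi.single a 1) (Pi.single b 1) := by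
    intro a b
    unfold pd
    rw [fderiv_clm_apply hd (differentiableAt_const _)]
    simp
  rw [key, key]
  exact hφ.contDiffAt.isSymmSndFDerivAt (by simpa using two_le_coe_top) _ _

lemma pd_lap (j : Fin 3) (hφ : ContDiff ℝ (⊤ : ℕ∞) φ) : pd j (lap φ) x = lap (pd j φ) x := by
  have h : ∀ k, ContDiff ℝ (⊤ : ℕ∞) (pd k (pd k φ)) := fun k => contDiff_pd k (contDiff_pd k hφ)
  have hsum : pd j (lap φ) x = ∑ k, pd j (pd k (pd k φ)) x :=
    pd_sum j fun k => (h k).differentiable (by simp)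
  rw [hsum]
  refine Finset.sum_congr rfl fun k _ => ?_
  rw [pd_comm j k (contDiff_pd k hφ)]
  congr 1
  exact funext fun y => pd_comm j k hφ

lemma contDiff_lap (hφ : ContDiff ℝ (⊤ : ℕ∞) φ) : ContDiff ℝ (⊤ : ℕ∞) (lap φ) :=
  ContDiff.sum fun k _ => contDiff_pd k (contDiff_pd k hφ)

lemma lap_add (hφ : ContDiff ℝ (⊤ : ℕ∞) φ) (hψ : ContDiff ℝ (⊤ : ℕ∞) ψ) :
    lap (fun y => φ y + ψ y) x = lap φ x + lap ψ x := by
  have h1 : Differentiable ℝ φ := hφ.differentiable (by simp)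
  have h2 : Differentiable ℝ ψ := hψ.differentiable (by simp)
  have d1 : ∀ k, Differentiable ℝ (pd k φ) := fun k => (contDiff_pd k hφ).differentiable (by simp)
  have d2 : ∀ k, Differentiable ℝ (pd k ψ) := fun k => (contDiff_pd k hψ).differentiable (by simp)
  simp only [lap, pd_add _ h1 h2, pd_add _ (d1 _) (d2 _), Finset.sum_add_distrib]

lemma lap_mul (hφ : ContDiff ℝ (⊤ : ℕ∞) φ) (hψ : ContDiff ℝ (⊤ : ℕ∞) ψ) :
    lap (fun y => φ y * ψ y) x
      = lap φ x * ψ x + φ x * lap ψ x + 2 * ∑ k, pd k φ x * pd k ψ x := by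
  have h1 : Differentiable ℝ φ := hφ.differentiable (by simp)
  have h2 : Differentiable ℝ ψ := hψ.differentiable (by simp)
  have d1 : ∀ k, Differentiable ℝ (pd k φ) := fun k => (contDiff_pd k hφ).differentiable (by simp)
  have d2 : ∀ k, Differentiable ℝ (pd k ψ) := fun k => (contDiff_pd k hψ).differentiable (by simp)
  have key : ∀ k, pd k (fun y => pd k (fun z => φ z * ψ z) y) x
      = pd k (fun y => pd k φ y) x * ψ x + φ x * pd k (fun y => pd k ψ y) x
        + 2 * (pd k φ x * pd k ψ x) := by
    intro k
    simp only [pd_mul _ h1 h2]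
    rw [pd_add _ ((d1 k).fun_mul h2) (h1.fun_mul (d2 k)), pd_mul _ (d1 k) h2, pd_mul _ h1 (d2 k)]
    ring
  simp only [lap, key, Finset.sum_add_distrib, Finset.sum_mul, Finset.mul_sum]

lemma fderiv_eq_sum_pd (v : Fin 3 → ℝ) : fderiv ℝ φ x v = ∑ j, v j * pd j φ x := by
  conv_lhs => rw [pi_eq_sum_univ' v]
  simp [pd]

lemma abs_sub_le_of_abs_pd_le {C : ℝ} (hφ : Differentiable ℝ φ)
    (h : ∀ y j, |pd j φ y| ≤ C) (x : Fin 3 → ℝ) : |φ x - φ 0| ≤ 3 * C * ‖x‖ := by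
  have hb : ∀ y ∈ (univ : Set (Fin 3 → ℝ)), ‖fderiv ℝ φ y‖ ≤ 3 * C := by
    intro y _
    have hC : 0 ≤ C := (abs_nonneg _).trans (h y 0)
    refine ContinuousLinearMap.opNorm_le_bound _ (by positivity) fun v => ?_
    rw [fderiv_eq_sum_pd, Real.norm_eq_abs]
    calc |∑ j, v j * pd j φ y| ≤ ∑ j, |v j * pd j φ y| := Finset.abs_sum_le_sum_abs _ _
      _ ≤ ∑ _j : Fin 3, ‖v‖ * C := by
        refine Finset.sum_le_sum fun j _ => ?_
        rw [abs_mul]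
        exact mul_le_mul (norm_le_pi_norm v j) (h y j) (abs_nonneg _) (norm_nonneg _)
      _ = 3 * C * ‖v‖ := by simp; ring
  simpa using convex_univ.norm_image_sub_le_of_norm_fderiv_le
    (fun y _ => hφ y) hb (mem_univ 0) (mem_univ x)

lemma pd_eq_zero_of_isLocalMax (j : Fin 3) (h : IsLocalMax φ x) : pd j φ x = 0 := by
  simp [pd, h.fderiv_eq_zero]

lemma deriv_comp_line (j : Fin 3) (hφ : Differentiable ℝ φ) (s : ℝ) :
    deriv (fun r : ℝ => φ (x + r • Pi.single j 1)) s = pd j φ (x + s • Pi.single j 1) := by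
  have hl : HasDerivAt (fun r : ℝ => x + r • (Pi.single j 1 : Fin 3 → ℝ)) (Pi.single j 1) s := by
    simpa using ((hasDerivAt_id s).smul_const (Pi.single j 1 : Fin 3 → ℝ)).const_add x
  exact ((hφ _).hasFDerivAt.comp_hasDerivAt s hl).deriv

lemma pd_pd_nonpos_of_isLocalMax (j : Fin 3) (hφ : ContDiff ℝ (⊤ : ℕ∞) φ)
    (h : IsLocalMax φ x) : pd j (fun y => pd j φ y) x ≤ 0 := by
  by_contra! hpos
  have hd : Differentiable ℝ φ := hφ.differentiable (by simp)
  have hd' : Differentiable ℝ (pd j φ) := (contDiff_pd j hφ).differentiable (by simp)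
  set g : ℝ → ℝ := fun r => φ (x + r • Pi.single j 1) with hg
  have hlc : Continuous fun r : ℝ => x + r • (Pi.single j 1 : Fin 3 → ℝ) := by fun_prop
  have hgc : Continuous g := hd.continuous.comp hlc
  have g1 : deriv g = fun s => pd j φ (x + s • Pi.single j 1) :=
    funext fun s => deriv_comp_line j hd s
  have g2 : deriv (deriv g) 0 = pd j (fun y => pd j φ y) x := by
    rw [g1, deriv_comp_line j hd' 0]; simp
  have hmax : IsLocalMax g 0 := by
    have : Tendsto (fun r : ℝ => x + r • (Pi.single j 1 : Fin 3 → ℝ)) (nhds 0) (nhds x) := by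
      simpa using hlc.tendsto 0
    have := this.eventually h
    simpa [IsLocalMax, IsMaxFilter, hg] using this
  have hmin : IsLocalMin g 0 :=
    isLocalMin_of_deriv_deriv_pos (by rw [g2]; exact hpos) hmax.deriv_eq_zero hgc.continuousAt
  have hconst : g =ᶠ[nhds 0] fun _ => g 0 := by
    filter_upwards [hmax, hmin] with r h1 h2 using le_antisymm h1 h2
  have : deriv (deriv g) 0 = 0 := by
    rw [hconst.deriv.deriv_eq]; simp
  linarith

lemma lap_nonpos_of_isLocalMax (hφ : ContDiff ℝ (⊤ : ℕ∞) φ) (h : IsLocalMax φ x) :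
    lap φ x ≤ 0 :=
  Finset.sum_nonpos fun j _ => pd_pd_nonpos_of_isLocalMax j hφ h

end PartialDerivatives

namespace SmoothOnStrip

variable {T : ℝ} {f g : (Fin 3 → ℝ) → ℝ → ℝ}

lemma const (c : ℝ) : SmoothOnStrip T fun _ _ => c := contDiffOn_const

lemma add (hf : SmoothOnStrip T f) (hg : SmoothOnStrip T g) :
    SmoothOnStrip T fun x t => f x t + g x t := ContDiffOn.add hf hg

lemma mul (hf : SmoothOnStrip T f) (hg : SmoothOnStrip T g) :
    SmoothOnStrip T fun x t => f x t * g x t := ContDiffOn.mul hf hg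

lemma sum {ι : Type*} [Fintype ι] {F : ι → (Fin 3 → ℝ) → ℝ → ℝ}
    (hF : ∀ i, SmoothOnStrip T (F i)) : SmoothOnStrip T fun x t => ∑ i, F i x t :=
  ContDiffOn.sum fun i _ => hF i

lemma coord (i : Fin 3) : SmoothOnStrip T fun x _ => x i := by
  unfold SmoothOnStrip; fun_prop

lemma exp_time (c : ℝ) : SmoothOnStrip T fun _ t => Real.exp (c * t) := by
  unfold SmoothOnStrip; fun_prop

lemma slice (hf : SmoothOnStrip T f) {t : ℝ} (ht : t ∈ Icc 0 T) :
    ContDiff ℝ (⊤ : ℕ∞) fun y => f y t := by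
  have hs : ContDiff ℝ (⊤ : ℕ∞) fun y : Fin 3 → ℝ => (y, t) := by fun_prop
  exact contDiffOn_univ.1 (ContDiffOn.comp (g := fun q : (Fin 3 → ℝ) × ℝ => f q.1 q.2) hf
    hs.contDiffOn fun y _ => ⟨mem_univ _, ht⟩)

lemma contDiffAt (hf : SmoothOnStrip T f) (x : Fin 3 → ℝ) {t : ℝ} (ht : t ∈ Ioo 0 T) :
    ContDiffAt ℝ (⊤ : ℕ∞) (fun q : (Fin 3 → ℝ) × ℝ => f q.1 q.2) (x, t) :=
  ContDiffOn.contDiffAt hf (prod_mem_nhds univ_mem (Icc_mem_nhds ht.1 ht.2))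

lemma differentiableAt_time (hf : SmoothOnStrip T f) (x : Fin 3 → ℝ) {t : ℝ}
    (ht : t ∈ Ioo 0 T) : DifferentiableAt ℝ (fun s => f x s) t :=
  DifferentiableAt.comp (g := fun q : (Fin 3 → ℝ) × ℝ => f q.1 q.2) (f := fun s => (x, s)) t
    ((hf.contDiffAt x ht).differentiableAt (by simp)) (by fun_prop)

lemma pd_eq_fderiv (hf : SmoothOnStrip T f) (j : Fin 3) (x : Fin 3 → ℝ) {t : ℝ}
    (ht : t ∈ Ioo 0 T) : pd j (fun y => f y t) x
      = fderiv ℝ (fun q : (Fin 3 → ℝ) × ℝ => f q.1 q.2) (x, t) (Pi.single j 1, 0) := by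
  have hl : HasFDerivAt (fun y : Fin 3 → ℝ => (y, t))
      (ContinuousLinearMap.inl ℝ (Fin 3 → ℝ) ℝ) x := hasFDerivAt_prodMk_left x t
  have h := HasFDerivAt.comp (f := fun y : Fin 3 → ℝ => (y, t)) x
    ((hf.contDiffAt x ht).differentiableAt (by simp)).hasFDerivAt hl
  have h' : fderiv ℝ (fun y => f y t) x = _ := h.fderiv
  simp [pd, h']

lemma deriv_eq_fderiv (hf : SmoothOnStrip T f) (x : Fin 3 → ℝ) {t : ℝ}
    (ht : t ∈ Ioo 0 T) : deriv (fun s => f x s) t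
      = fderiv ℝ (fun q : (Fin 3 → ℝ) × ℝ => f q.1 q.2) (x, t) (0, 1) := by
  have h := ((hf.contDiffAt x ht).differentiableAt (by simp)).hasFDerivAt.comp t
    (hasFDerivAt_prodMk_right x t)
  have h' : fderiv ℝ (fun s => f x s) t = _ := h.fderiv
  rw [← fderiv_apply_one_eq_deriv, h']
  simp

lemma pd (hf : SmoothOnStrip T f) (hT : 0 < T) (j : Fin 3) :
    SmoothOnStrip T fun x t => pd j (fun y => f y t) x := by
  have hu : UniqueDiffOn ℝ ((univ : Set (Fin 3 → ℝ)) ×ˢ Icc 0 T) :=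
    uniqueDiffOn_univ.prod (uniqueDiffOn_Icc hT)
  have h1 : ContDiffOn ℝ (⊤ : ℕ∞) (fun q => fderivWithin ℝ
      (fun q : (Fin 3 → ℝ) × ℝ => f q.1 q.2) (univ ×ˢ Icc 0 T) q (Pi.single j 1, 0))
      (univ ×ˢ Icc 0 T) :=
    (ContDiffOn.fderivWithin (m := (⊤ : ℕ∞)) hf hu (by simp)).clm_apply contDiffOn_const
  refine h1.congr fun q hq => ?_
  obtain ⟨x, t⟩ := q
  have hd : DifferentiableWithinAt ℝ (fun q : (Fin 3 → ℝ) × ℝ => f q.1 q.2)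
      (univ ×ˢ Icc 0 T) (x, t) := ContDiffOn.differentiableOn hf (by simp) _ hq
  have hl : HasFDerivAt (fun y : Fin 3 → ℝ => (y, t))
      (ContinuousLinearMap.inl ℝ (Fin 3 → ℝ) ℝ) x := hasFDerivAt_prodMk_left x t
  have h := HasFDerivWithinAt.comp (f := fun y : Fin 3 → ℝ => (y, t)) (s := univ) x
    hd.hasFDerivWithinAt hl.hasFDerivWithinAt fun y _ => ⟨mem_univ _, hq.2⟩
  have h' : fderiv ℝ (fun y => f y t) x = _ := (hasFDerivWithinAt_univ.1 h).fderiv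
  simp [_root_.pd, h']

lemma deriv_pd_comm (hf : SmoothOnStrip T f) (j : Fin 3) (x : Fin 3 → ℝ) {t : ℝ}
    (ht : t ∈ Ioo 0 T) : deriv (fun s => _root_.pd j (fun y => f y s) x) t
      = _root_.pd j (fun y => deriv (fun s => f y s) t) x := by
  set F : (Fin 3 → ℝ) × ℝ → ℝ := fun q => f q.1 q.2 with hF
  have hFx : ContDiffAt ℝ (⊤ : ℕ∞) F (x, t) := hf.contDiffAt x ht
  have hd : DifferentiableAt ℝ (fderiv ℝ F) (x, t) :=
    (hFx.fderiv_right (m := (⊤ : ℕ∞)) (by simp)).differentiableAt (by simp)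
  have e1 : (fun s => _root_.pd j (fun y => f y s) x)
      =ᶠ[nhds t] fun s => fderiv ℝ F (x, s) (Pi.single j 1, 0) := by
    filter_upwards [Ioo_mem_nhds ht.1 ht.2] with s hs using hf.pd_eq_fderiv j x hs
  have e2 : (fun y => deriv (fun s => f y s) t) = fun y => fderiv ℝ F (y, t) (0, 1) :=
    funext fun y => hf.deriv_eq_fderiv y ht
  have h1 := (hd.hasFDerivAt.comp t (hasFDerivAt_prodMk_right x t)).clm_apply
    (hasFDerivAt_const (Pi.single j 1, (0 : ℝ)) t)
  have hl : HasFDerivAt (fun y : Fin 3 → ℝ => (y, t))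
      (ContinuousLinearMap.inl ℝ (Fin 3 → ℝ) ℝ) x := hasFDerivAt_prodMk_left x t
  have h2 := (HasFDerivAt.comp (f := fun y : Fin 3 → ℝ => (y, t)) x hd.hasFDerivAt hl).clm_apply
    (hasFDerivAt_const ((0 : Fin 3 → ℝ), (1 : ℝ)) x)
  have h1' : fderiv ℝ (fun s => fderiv ℝ F (x, s) (Pi.single j 1, 0)) t = _ := h1.fderiv
  have h2' : fderiv ℝ (fun y => fderiv ℝ F (y, t) (0, 1)) x = _ := h2.fderiv
  rw [e1.deriv_eq, e2, ← fderiv_apply_one_eq_deriv, _root_.pd, h1', h2']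
  simpa using hFx.isSymmSndFDerivAt (by simpa using two_le_coe_top) (0, 1) (Pi.single j 1, 0)

end SmoothOnStrip

section Parab

variable {ν T : ℝ} {u : (Fin 3 → ℝ) → ℝ → (Fin 3 → ℝ)} {f g : (Fin 3 → ℝ) → ℝ → ℝ}
  {x : Fin 3 → ℝ} {t : ℝ}

lemma parab_const (c : ℝ) : parab ν u (fun _ _ => c) x t = 0 := by
  simp [parab, lap, pd_const]

lemma parab_add (hf : SmoothOnStrip T f) (hg : SmoothOnStrip T g) (ht : t ∈ Ioo 0 T) :
    parab ν u (fun y s => f y s + g y s) x t = parab ν u f x t + parab ν u g x t := by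
  have hf' := hf.slice (Ioo_subset_Icc_self ht)
  have hg' := hg.slice (Ioo_subset_Icc_self ht)
  simp only [parab, lap_add hf' hg',
    pd_add _ (hf'.differentiable (by simp)) (hg'.differentiable (by simp)),
    deriv_fun_add (hf.differentiableAt_time x ht) (hg.differentiableAt_time x ht),
    mul_add, Finset.sum_add_distrib]
  ring

lemma parab_mul (hf : SmoothOnStrip T f) (hg : SmoothOnStrip T g) (ht : t ∈ Ioo 0 T) :
    parab ν u (fun y s => f y s * g y s) x t = parab ν u f x t * g x t + f x t * parab ν u g x t
      - 2 * ν * ∑ k, pd k (fun y => f y t) x * pd k (fun y => g y t) x := by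
  have hf' := hf.slice (Ioo_subset_Icc_self ht)
  have hg' := hg.slice (Ioo_subset_Icc_self ht)
  simp only [parab, lap_mul hf' hg',
    pd_mul _ (hf'.differentiable (by simp)) (hg'.differentiable (by simp)),
    deriv_fun_mul (hf.differentiableAt_time x ht) (hg.differentiableAt_time x ht)]
  simp only [Fin.sum_univ_three]
  ring

lemma parab_const_mul (c : ℝ) (hf : SmoothOnStrip T f) (ht : t ∈ Ioo 0 T) :
    parab ν u (fun y s => c * f y s) x t = c * parab ν u f x t := by
  rw [parab_mul (.const c) hf ht, parab_const]
  simp [pd_const]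

lemma parab_sum {ι : Type*} [Fintype ι] {F : ι → (Fin 3 → ℝ) → ℝ → ℝ}
    (hF : ∀ i, SmoothOnStrip T (F i)) (ht : t ∈ Ioo 0 T) :
    parab ν u (fun y s => ∑ i, F i y s) x t = ∑ i, parab ν u (F i) x t := by
  classical
  suffices h : ∀ s : Finset ι, SmoothOnStrip T (fun y r => ∑ i ∈ s, F i y r) ∧
      parab ν u (fun y r => ∑ i ∈ s, F i y r) x t = ∑ i ∈ s, parab ν u (F i) x t from
    (h Finset.univ).2
  intro s
  induction s using Finset.induction_on with
  | empty => exact ⟨by simpa using SmoothOnStrip.const 0, by simpa using parab_const 0⟩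
  | insert a s ha ih =>
    simp only [Finset.sum_insert ha]
    exact ⟨(hF a).add ih.1, by rw [parab_add (hF a) ih.1 ht, ih.2]⟩

lemma parab_coord (i : Fin 3) : parab ν u (fun y _ => y i) x t = u x t i := by
  simp [parab, lap, pd_coord, pd_const]

lemma parab_exp_time (c : ℝ) :
    parab ν u (fun _ s => Real.exp (c * s)) x t = c * Real.exp (c * t) := by
  have h : HasDerivAt (fun s => Real.exp (c * s)) (Real.exp (c * t) * c) t := by
    simpa using ((hasDerivAt_id t).const_mul c).exp
  simp [parab, lap, pd_const, h.deriv, mul_comm]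

/-- At an interior point that is a spatial local maximum and a maximum over the past, the
parabolic operator is nonnegative. -/
lemma parab_nonneg_of_max (hν : 0 ≤ ν) (hf : SmoothOnStrip T f) (ht : t ∈ Ioo 0 T)
    (hx : IsLocalMax (fun y => f y t) x) (hpast : ∀ s ∈ Icc 0 t, f x s ≤ f x t) :
    0 ≤ parab ν u f x t := by
  have hlap := lap_nonpos_of_isLocalMax (hf.slice (Ioo_subset_Icc_self ht)) hx
  have hderiv : 0 ≤ deriv (fun s => f x s) t := by
    have h := (hf.differentiableAt_time x ht).hasDerivAt.hasFDerivAt.hasFDerivWithinAt (s := Icc 0 t)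
    have hm : IsLocalMaxOn (fun s => f x s) (Icc 0 t) t :=
      IsMaxOn.localize fun s hs => hpast s hs
    have hc : (0 : ℝ) - t ∈ posTangentConeAt (Icc 0 t) t :=
      sub_mem_posTangentConeAt_of_segment_subset (by rw [segment_symm, segment_eq_Icc ht.1.le])
    have := hm.hasFDerivWithinAt_nonpos h hc
    simp at this
    nlinarith [ht.1]
  simp only [parab, pd_eq_zero_of_isLocalMax _ hx, mul_zero, Finset.sum_const_zero, add_zero]
  nlinarith [mul_nonneg hν (neg_nonneg.2 hlap)]

end Parab

/-- Differentiating the equation `∂ₜf + u·∇f - νΔf = 0` in space. -/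
lemma parab_pd_of_parab_eq_zero {ν T : ℝ} {u : (Fin 3 → ℝ) → ℝ → (Fin 3 → ℝ)}
    {f : (Fin 3 → ℝ) → ℝ → ℝ} (hu : ∀ k, SmoothOnStrip T fun x t => u x t k)
    (hf : SmoothOnStrip T f) {t : ℝ} (ht : t ∈ Ioo 0 T) (h0 : ∀ x, parab ν u f x t = 0)
    (j : Fin 3) (x : Fin 3 → ℝ) :
    parab ν u (fun y s => pd j (fun z => f z s) y) x t
      = -∑ k, pd k (fun y => f y t) x * pd j (fun y => u y t k) x := by
  have hft := hf.slice (Ioo_subset_Icc_self ht)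
  have du : ∀ k, Differentiable ℝ fun y => u y t k :=
    fun k => ((hu k).slice (Ioo_subset_Icc_self ht)).differentiable (by simp)
  have df : ∀ k, Differentiable ℝ (pd k fun y => f y t) :=
    fun k => (contDiff_pd k hft).differentiable (by simp)
  have dl : Differentiable ℝ (lap fun y => f y t) := (contDiff_lap hft).differentiable (by simp)
  have e : (fun y => deriv (fun s => f y s) t) = fun y => ν * lap (fun z => f z t) y
      + -1 * ∑ k, u y t k * pd k (fun z => f z t) y := by
    funext y
    have := h0 y
    unfold parab at this
    linarith
  have dsum : Differentiable ℝ fun y => ∑ k, u y t k * pd k (fun z => f z t) y :=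
    Differentiable.fun_sum fun k _ => (du k).fun_mul (df k)
  unfold parab
  rw [hf.deriv_pd_comm j x ht, e, pd_add _ (dl.const_mul ν) (dsum.const_mul (-1)),
    pd_mul _ (differentiable_const ν) dl, pd_mul _ (differentiable_const (-1)) dsum,
    pd_sum _ fun k => (du k).fun_mul (df k), pd_const, pd_const, pd_lap j hft]
  simp only [pd_mul j (du _) (df _), pd_comm j _ hft, Finset.sum_add_distrib]
  have e3 : ∑ k, pd j (fun y => u y t k) x * pd k (fun y => f y t) x
      = ∑ k, pd k (fun y => f y t) x * pd j (fun y => u y t k) x := by simp only [mul_comm]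
  rw [e3]
  ring

section MaximumPrinciple

lemma norm_le_one_add_sum_sq (x : Fin 3 → ℝ) : ‖x‖ ≤ 1 + ∑ i, x i * x i := by
  have hs : ∀ i, x i * x i ≤ ∑ i, x i * x i := fun i =>
    Finset.single_le_sum (f := fun i => x i * x i) (fun i _ => mul_self_nonneg _)
      (Finset.mem_univ i)
  have h0 : 0 ≤ ∑ i, x i * x i := Finset.sum_nonneg fun i _ => mul_self_nonneg _
  rw [pi_norm_le_iff_of_nonneg (by positivity)]
  intro i
  rw [Real.norm_eq_abs, abs_le]
  constructor <;> nlinarith [hs i, sq_nonneg (x i + 1), sq_nonneg (x i - 1)]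

lemma sq_norm_le_sum_sq (x : Fin 3 → ℝ) : ‖x‖ ^ 2 ≤ ∑ i, x i * x i := by
  have h0 : 0 ≤ ∑ i, x i * x i := Finset.sum_nonneg fun i _ => mul_self_nonneg _
  rw [← Real.le_sqrt (norm_nonneg _) h0, pi_norm_le_iff_of_nonneg (Real.sqrt_nonneg _)]
  intro i
  refine Real.abs_le_sqrt ?_
  rw [pow_two]
  exact Finset.single_le_sum (f := fun i => x i * x i) (fun i _ => mul_self_nonneg _)
    (Finset.mem_univ i)

variable {ν T : ℝ} {u : (Fin 3 → ℝ) → ℝ → (Fin 3 → ℝ)} {w : (Fin 3 → ℝ) → ℝ → ℝ}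

lemma smoothOnStrip_one_add_sum_sq :
    SmoothOnStrip T fun x _ => 1 + ∑ i, x i * x i :=
  (SmoothOnStrip.const 1).add (.sum fun i => (SmoothOnStrip.coord i).mul (.coord i))

/-- The quartic barrier `(1 + |x|²)²` is a supersolution up to a zeroth-order term. -/
lemma le_parab_barrier (hν : 0 ≤ ν) {C : ℝ} {x : Fin 3 → ℝ} {t : ℝ} (ht : t ∈ Ioo 0 T)
    (hu : ∀ i, |u x t i| ≤ C) :
    -(12 * C + 20 * ν) * ((1 + ∑ i, x i * x i) * (1 + ∑ i, x i * x i))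
      ≤ parab ν u (fun y _ => (1 + ∑ i, y i * y i) * (1 + ∑ i, y i * y i)) x t := by
  have hc : ∀ i, SmoothOnStrip T fun x _ => x i * x i :=
    fun i => (SmoothOnStrip.coord i).mul (.coord i)
  have hp : parab ν u (fun y _ => 1 + ∑ i, y i * y i) x t = ∑ i, (2 * (u x t i * x i) - 2 * ν) := by
    rw [parab_add (.const 1) (.sum hc) ht, parab_const, zero_add, parab_sum hc ht]
    refine Finset.sum_congr rfl fun i _ => ?_
    rw [parab_mul (.coord i) (.coord i) ht, parab_coord]
    simp [pd_coord]
    ring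
  have hd : ∀ i : Fin 3, Differentiable ℝ fun y : Fin 3 → ℝ => y i := fun i => by fun_prop
  have hgrad : ∀ k, pd k (fun y : Fin 3 → ℝ => 1 + ∑ i, y i * y i) x = 2 * x k := by
    intro k
    rw [pd_add _ (differentiable_const _) (Differentiable.fun_sum fun i _ => (hd i).fun_mul (hd i)),
      pd_sum _ fun i => (hd i).fun_mul (hd i)]
    simp [pd_const, pd_mul _ (hd _) (hd _), pd_coord, Finset.sum_add_distrib]
    ring
  have h0 : 0 ≤ ∑ i, x i * x i := Finset.sum_nonneg fun i _ => mul_self_nonneg _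
  rw [parab_mul smoothOnStrip_one_add_sum_sq smoothOnStrip_one_add_sum_sq ht, hp]
  simp only [hgrad]
  have hsq : ∑ k, 2 * x k * (2 * x k) = 4 * ∑ i, x i * x i := by
    rw [Finset.mul_sum]
    exact Finset.sum_congr rfl fun k _ => by ring
  rw [hsq]
  have hsum : -(6 * C * (1 + ∑ i, x i * x i)) - 6 * ν ≤ ∑ i, (2 * (u x t i * x i) - 2 * ν) := by
    have h1 : ∀ i, -(C * (1 + ∑ i, x i * x i)) ≤ u x t i * x i := fun i => by
      refine (abs_le.1 ?_).1
      rw [abs_mul]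
      exact mul_le_mul (hu i) ((norm_le_pi_norm x i).trans (norm_le_one_add_sum_sq x))
        (abs_nonneg _) ((abs_nonneg _).trans (hu i))
    have h2 := Finset.sum_le_sum fun i (_ : i ∈ Finset.univ) =>
      sub_le_sub_right (mul_le_mul_of_nonneg_left (h1 i) zero_le_two) (2 * ν)
    refine le_trans (le_of_eq ?_) h2
    simp only [Finset.sum_const, Finset.card_univ, Fintype.card_fin, nsmul_eq_mul]
    push_cast
    ring
  set q := ∑ i, x i * x i
  have hmul := mul_le_mul_of_nonneg_right hsum (by positivity : 0 ≤ 1 + q)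
  have hνq : 0 ≤ ν * q := by positivity
  have hνq2 : 0 ≤ ν * q * q := by positivity
  nlinarith

/-- Maximum principle on `ℝ³ × (0, T)` for subsolutions of quadratic growth. -/
lemma nonpos_of_parab_le (hν : 0 ≤ ν) {C C' K : ℝ}
    (hu : ∀ x, ∀ t ∈ Ioo 0 T, ∀ i, |u x t i| ≤ C) (hw : SmoothOnStrip T w)
    (hgrowth : ∀ x, ∀ t ∈ Icc 0 T, w x t ≤ C' * (1 + ∑ i, x i * x i))
    (hinit : ∀ x, w x 0 ≤ 0) (hsub : ∀ x, ∀ t ∈ Ioo 0 T, parab ν u w x t ≤ K * w x t)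
    (x₀ : Fin 3 → ℝ) {t₀ : ℝ} (ht₀ : t₀ ∈ Ioo 0 T) : w x₀ t₀ ≤ 0 := by
  by_contra! hpos
  set p : (Fin 3 → ℝ) → ℝ := fun x => 1 + ∑ i, x i * x i with hp
  have hp1 : ∀ x, 1 ≤ p x := fun x =>
    le_add_of_nonneg_right (Finset.sum_nonneg fun i _ => mul_self_nonneg _)
  set c : ℝ := -(K + (12 * C + 20 * ν) + 1) with hc
  obtain ⟨ε, hε, hε'⟩ : ∃ ε > 0, ε * (p x₀ * p x₀) < Real.exp (c * t₀) * w x₀ t₀ := by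
    have hpp : 0 < p x₀ * p x₀ := by nlinarith [hp1 x₀]
    have hew : 0 < Real.exp (c * t₀) * w x₀ t₀ := mul_pos (Real.exp_pos _) hpos
    refine ⟨Real.exp (c * t₀) * w x₀ t₀ / 2 / (p x₀ * p x₀), by positivity, ?_⟩
    rw [div_mul_cancel₀ _ hpp.ne']
    linarith
  set G : (Fin 3 → ℝ) → ℝ → ℝ :=
    fun x t => Real.exp (c * t) * w x t + -ε * (p x * p x) with hG
  have hpp : SmoothOnStrip T fun x _ => p x * p x :=
    smoothOnStrip_one_add_sum_sq.mul smoothOnStrip_one_add_sum_sq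
  have hew : SmoothOnStrip T fun x t => Real.exp (c * t) * w x t :=
    (SmoothOnStrip.exp_time c).mul hw
  have hGs : SmoothOnStrip T G := hew.add ((SmoothOnStrip.const (-ε)).mul hpp)
  set D : ℝ := Real.exp (|c| * T) * |C'| with hD
  set R : ℝ := max ‖x₀‖ (D / ε) with hR
  have hfar : ∀ x, ∀ t ∈ Icc 0 T, R ≤ ‖x‖ → G x t ≤ 0 := by
    intro x t ht hx
    have h1 : D ≤ ε * p x := by
      have : D / ε ≤ p x := (le_max_right _ _).trans (hx.trans (norm_le_one_add_sum_sq x))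
      rwa [div_le_iff₀ hε, mul_comm] at this
    have h2 : Real.exp (c * t) * w x t ≤ D * p x := by
      have hexp : Real.exp (c * t) ≤ Real.exp (|c| * T) := Real.exp_le_exp.2
        (mul_le_mul (le_abs_self c) ht.2 ht.1 (abs_nonneg c))
      calc Real.exp (c * t) * w x t ≤ Real.exp (c * t) * (|C'| * p x) := by
            refine mul_le_mul_of_nonneg_left ((hgrowth x t ht).trans ?_) (Real.exp_pos _).le
            exact mul_le_mul_of_nonneg_right (le_abs_self C') (by linarith [hp1 x])
        _ ≤ Real.exp (|c| * T) * (|C'| * p x) :=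
            mul_le_mul_of_nonneg_right hexp
              (mul_nonneg (abs_nonneg _) (by linarith [hp1 x]))
        _ = D * p x := by rw [hD]; ring
    have h3 := mul_le_mul_of_nonneg_right h1 (by linarith [hp1 x] : 0 ≤ p x)
    simp only [hG]
    linarith
  obtain ⟨⟨x, t⟩, hmem, hmax⟩ :=
    ((isCompact_closedBall (0 : Fin 3 → ℝ) R).prod (isCompact_Icc (a := 0) (b := t₀))).exists_isMaxOn
      ⟨(x₀, t₀), by simp [hR], ht₀.1.le, le_rfl⟩
      ((ContDiffOn.continuousOn hGs).mono
        (prod_mono (subset_univ _) (Icc_subset_Icc_right ht₀.2.le)))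
  have hmax' : ∀ y s, ‖y‖ ≤ R → s ∈ Icc 0 t₀ → G y s ≤ G x t := by
    intro y s hy hs
    exact isMaxOn_iff.1 hmax (y, s) ⟨by simpa using hy, hs⟩
  have hxR : ‖x‖ ≤ R := by simpa using hmem.1
  have htI : t ∈ Icc 0 t₀ := hmem.2
  have hGpos : 0 < G x t := by
    refine lt_of_lt_of_le ?_ (hmax' x₀ t₀ (le_max_left _ _) ⟨ht₀.1.le, le_rfl⟩)
    simp only [hG]
    linarith
  have hpx : 0 ≤ p x * p x := mul_self_nonneg _
  have ht0 : 0 < t := by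
    refine lt_of_le_of_ne htI.1 fun h => ?_
    subst h
    have := hinit x
    simp only [hG, mul_zero, Real.exp_zero, one_mul] at hGpos
    nlinarith
  have ht : t ∈ Ioo 0 T := ⟨ht0, htI.2.trans_lt ht₀.2⟩
  have hxR' : ‖x‖ < R := by
    by_contra! h
    linarith [hfar x t (Ioo_subset_Icc_self ht) h]
  have hloc : IsLocalMax (fun y => G y t) x := by
    have : ∀ᶠ y in nhds x, ‖y‖ < R := continuous_norm.continuousAt.eventually_lt
      continuousAt_const hxR'
    filter_upwards [this] with y hy using hmax' y t hy.le htI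
  have hnonneg : 0 ≤ parab ν u G x t := parab_nonneg_of_max hν hGs ht hloc
    fun s hs => hmax' x s hxR ⟨hs.1, hs.2.trans htI.2⟩
  have hGeq : parab ν u G x t = c * Real.exp (c * t) * w x t + Real.exp (c * t) * parab ν u w x t
      + -ε * parab ν u (fun y _ => p y * p y) x t := by
    rw [hG, parab_add hew ((SmoothOnStrip.const (-ε)).mul hpp) ht, parab_const_mul _ hpp ht,
      parab_mul (.exp_time c) hw ht, parab_exp_time]
    simp [pd_const]
  have hexp := Real.exp_pos (c * t)
  have hEw : ε * (p x * p x) < Real.exp (c * t) * w x t := by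
    simp only [hG] at hGpos; linarith
  have hsub' := mul_le_mul_of_nonneg_left (hsub x t ht) hexp.le
  have hL : 0 ≤ 12 * C + 20 * ν := by linarith [(abs_nonneg _).trans (hu x t ht 0)]
  have hbar := mul_le_mul_of_nonneg_left (le_parab_barrier hν ht (hu x t ht)) hε.le
  have hlt := mul_le_mul_of_nonneg_left hEw.le hL
  have hew0 : 0 < Real.exp (c * t) * w x t := lt_of_le_of_lt (by positivity) hEw
  have hcw : c * Real.exp (c * t) * w x t
      = -(K + (12 * C + 20 * ν) + 1) * (Real.exp (c * t) * w x t) := by rw [← hc]; ring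
  rw [hGeq, hcw] at hnonneg
  simp only [hp] at hnonneg hlt
  linarith

end MaximumPrinciple

/-- A strip-smooth function with bounded spatial gradient grows at most linearly in space. -/
lemma SmoothOnStrip.exists_abs_le_of_abs_pd_le {T C : ℝ} {f : (Fin 3 → ℝ) → ℝ → ℝ}
    (hf : SmoothOnStrip T f) (h : ∀ x, ∀ t ∈ Icc 0 T, ∀ j, |_root_.pd j (fun y => f y t) x| ≤ C) :
    ∃ m, ∀ x, ∀ t ∈ Icc 0 T, |f x t| ≤ m * (1 + ‖x‖) := by
  have hc : ContinuousOn (fun t => f 0 t) (Icc 0 T) :=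
    (ContDiffOn.continuousOn hf).comp (f := fun t : ℝ => ((0 : Fin 3 → ℝ), t)) (by fun_prop)
      fun t ht => ⟨mem_univ _, ht⟩
  obtain ⟨m, hm⟩ := isCompact_Icc.exists_bound_of_continuousOn hc
  refine ⟨|m| + 3 * |C|, fun x t ht => ?_⟩
  have h1 := abs_sub_le_of_abs_pd_le (C := |C|) ((hf.slice ht).differentiable (by simp))
    (fun y j => (h y t ht j).trans (le_abs_self C)) x
  have h2 : |f 0 t| ≤ |m| := (hm t ht).trans (le_abs_self m)
  have h3 : |f x t| ≤ |f x t - f 0 t| + |f 0 t| := by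
    simpa using abs_add_le (f x t - f 0 t) (f 0 t)
  nlinarith [mul_nonneg (abs_nonneg m) (norm_nonneg x), abs_nonneg C]

/-- A quadratic form of the type `Z : Z B` is controlled by the Frobenius norm of `Z`. -/
lemma sum_mul_mul_apply_le {b : ℝ} (Z B : Matrix (Fin 3) (Fin 3) ℝ) (hB : ∀ i j, |B i j| ≤ b) :
    ∑ i, ∑ j, Z i j * (Z * B) i j ≤ 3 * b * ∑ i, ∑ j, Z i j * Z i j := by
  have hterm : ∀ i j l, Z i j * (Z i l * B l j) ≤ b * (Z i j * Z i j + Z i l * Z i l) / 2 := by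
    intro i j l
    obtain ⟨h1, h2⟩ := abs_le.1 (hB l j)
    nlinarith [mul_nonneg (sub_nonneg.2 h2) (sq_nonneg (Z i j + Z i l)),
      mul_nonneg (by linarith : 0 ≤ b + B l j) (sq_nonneg (Z i j - Z i l))]
  calc ∑ i, ∑ j, Z i j * (Z * B) i j = ∑ i, ∑ j, ∑ l, Z i j * (Z i l * B l j) := by
        simp only [Matrix.mul_apply, Finset.mul_sum]
    _ ≤ ∑ i, ∑ j, ∑ l, b * (Z i j * Z i j + Z i l * Z i l) / 2 :=
        Finset.sum_le_sum fun i _ => Finset.sum_le_sum fun j _ => Finset.sum_le_sum fun l _ =>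
          hterm i j l
    _ = 3 * b * ∑ i, ∑ j, Z i j * Z i j := by
        simp only [Fin.sum_univ_three]
        ring

/-- Energy inequality: if every entry of the matrix field `Z` satisfies `ΓZ = Z B` at a point
where `B` is bounded, then `|Z|²` is a subsolution there. -/
lemma parab_sum_sq_le {ν T b : ℝ} (hν : 0 ≤ ν) {u : (Fin 3 → ℝ) → ℝ → (Fin 3 → ℝ)}
    {Z : (Fin 3 → ℝ) → ℝ → Matrix (Fin 3) (Fin 3) ℝ} {B : Matrix (Fin 3) (Fin 3) ℝ}
    (hZ : ∀ i j, SmoothOnStrip T fun x t => Z x t i j) {x : Fin 3 → ℝ} {t : ℝ}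
    (ht : t ∈ Ioo 0 T) (hB : ∀ i j, |B i j| ≤ b)
    (heq : ∀ i j, parab ν u (fun y s => Z y s i j) x t = (Z x t * B) i j) :
    parab ν u (fun y s => ∑ i, ∑ j, Z y s i j * Z y s i j) x t
      ≤ 6 * b * ∑ i, ∑ j, Z x t i j * Z x t i j := by
  have hZZ : ∀ i j, SmoothOnStrip T fun x t => Z x t i j * Z x t i j :=
    fun i j => (hZ i j).mul (hZ i j)
  rw [parab_sum (fun i => .sum (hZZ i)) ht]
  calc ∑ i, parab ν u (fun y s => ∑ j, Z y s i j * Z y s i j) x t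
      = ∑ i, ∑ j, parab ν u (fun y s => Z y s i j * Z y s i j) x t :=
        Finset.sum_congr rfl fun i _ => parab_sum (hZZ i) ht
    _ ≤ ∑ i, ∑ j, 2 * (Z x t i j * (Z x t * B) i j) := by
        refine Finset.sum_le_sum fun i _ => Finset.sum_le_sum fun j _ => ?_
        rw [parab_mul (hZ i j) (hZ i j) ht, heq]
        have : 0 ≤ 2 * ν * ∑ k, pd k (fun y => Z y t i j) x * pd k (fun y => Z y t i j) x :=
          mul_nonneg (by positivity) (Finset.sum_nonneg fun k _ => mul_self_nonneg _)
        linarith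
    _ = 2 * ∑ i, ∑ j, Z x t i j * (Z x t * B) i j := by simp only [Finset.mul_sum]
    _ ≤ 6 * b * ∑ i, ∑ j, Z x t i j * Z x t i j := by
        linarith [sum_mul_mul_apply_le (Z x t) B hB]

/-- A matrix field with zero initial data, at most linear growth, and `ΓZ = Z B` with bounded `B`
vanishes identically. -/
lemma eq_zero_of_parab_eq_mul {ν T b C m : ℝ} (hν : 0 ≤ ν) (hT : 0 < T)
    {u : (Fin 3 → ℝ) → ℝ → (Fin 3 → ℝ)}
    {Z B : (Fin 3 → ℝ) → ℝ → Matrix (Fin 3) (Fin 3) ℝ}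
    (hu : ∀ x, ∀ t ∈ Ioo 0 T, ∀ i, |u x t i| ≤ C)
    (hZ : ∀ i j, SmoothOnStrip T fun x t => Z x t i j)
    (hgrowth : ∀ x, ∀ t ∈ Icc 0 T, ∀ i j, |Z x t i j| ≤ m * (1 + ‖x‖))
    (hinit : ∀ x, Z x 0 = 0) (hB : ∀ x, ∀ t ∈ Ioo 0 T, ∀ i j, |B x t i j| ≤ b)
    (heq : ∀ x, ∀ t ∈ Ioo 0 T, ∀ i j,
      parab ν u (fun y s => Z y s i j) x t = (Z x t * B x t) i j)
    (x : Fin 3 → ℝ) {t : ℝ} (ht : t ∈ Icc 0 T) : Z x t = 0 := by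
  set w : (Fin 3 → ℝ) → ℝ → ℝ := fun x t => ∑ i, ∑ j, Z x t i j * Z x t i j with hw
  have hws : SmoothOnStrip T w :=
    .sum fun i => .sum fun j => (hZ i j).mul (hZ i j)
  have hw_growth : ∀ x, ∀ t ∈ Icc 0 T, w x t ≤ 18 * m ^ 2 * (1 + ∑ i, x i * x i) := by
    intro x t ht
    have h1 : ∀ i j, Z x t i j * Z x t i j ≤ 2 * m ^ 2 * (1 + ∑ i, x i * x i) := by
      intro i j
      have h2 : Z x t i j * Z x t i j ≤ (m * (1 + ‖x‖)) * (m * (1 + ‖x‖)) := by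
        rw [← abs_mul_abs_self (Z x t i j)]
        exact mul_self_le_mul_self (abs_nonneg _) (hgrowth x t ht i j)
      have h3 : (1 + ‖x‖) ^ 2 ≤ 2 * (1 + ∑ i, x i * x i) := by
        nlinarith [sq_norm_le_sum_sq x, sq_nonneg (1 - ‖x‖)]
      nlinarith [mul_le_mul_of_nonneg_left h3 (sq_nonneg m)]
    calc w x t ≤ ∑ _i : Fin 3, ∑ _j : Fin 3, 2 * m ^ 2 * (1 + ∑ i, x i * x i) :=
          Finset.sum_le_sum fun i _ => Finset.sum_le_sum fun j _ => h1 i j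
      _ = 18 * m ^ 2 * (1 + ∑ i, x i * x i) := by
          simp only [Finset.sum_const, Finset.card_univ, Fintype.card_fin, nsmul_eq_mul]
          push_cast
          ring
  have hle : ∀ s ∈ Ioo 0 T, w x s ≤ 0 := fun s hs =>
    nonpos_of_parab_le hν hu hws hw_growth (fun y => by simp [hw, hinit])
      (fun y r hr => parab_sum_sq_le hν hZ hr (hB y r hr) (heq y r hr)) x hs
  have hcont : ContinuousOn (fun s => w x s) (Icc 0 T) :=
    (ContDiffOn.continuousOn hws).comp (f := fun s : ℝ => (x, s)) (by fun_prop)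
      fun s hs => ⟨mem_univ _, hs⟩
  have hwt : w x t ≤ 0 := by
    rw [← closure_Ioo hT.ne] at ht hcont
    exact le_on_closure hle hcont continuousOn_const ht
  ext i j
  have hnn : ∀ i j, 0 ≤ Z x t i j * Z x t i j := fun i j => mul_self_nonneg _
  have h1 : Z x t i j * Z x t i j ≤ w x t :=
    (Finset.single_le_sum (f := fun j => Z x t i j * Z x t i j) (fun j _ => hnn i j)
      (Finset.mem_univ j)).trans
    (Finset.single_le_sum (f := fun i => ∑ j, Z x t i j * Z x t i j)
      (fun i _ => Finset.sum_nonneg fun j _ => hnn i j) (Finset.mem_univ i))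
  exact mul_self_eq_zero.1 (le_antisymm (h1.trans hwt) (hnn i j))

/-- A bounded smooth solution `Q` (with bounded spatial gradient) of Constantin's
equation `ΓQ = (∇u)Q + 2ν Σₖ Q (∂ₖ∇A)(∂ₖQ)` with `Q(·,0) = I` is pointwise the
inverse of the Jacobian matrix `∇A`. -/
theorem Q_is_inverse_of_jacobian
    (ν T : ℝ) (hν : 0 < ν) (hT : 0 < T)
    (u A : (Fin 3 → ℝ) → ℝ → (Fin 3 → ℝ))
    (Q : (Fin 3 → ℝ) → ℝ → Matrix (Fin 3) (Fin 3) ℝ)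
    (hu_smooth : ContDiffOn ℝ (⊤ : ℕ∞) (fun q : (Fin 3 → ℝ) × ℝ => u q.1 q.2) (univ ×ˢ Icc 0 T))
    (hu_bdd : ∃ C : ℝ, ∀ (x : Fin 3 → ℝ), ∀ t ∈ Icc (0 : ℝ) T, ∀ i j : Fin 3,
      |u x t i| ≤ C ∧ |pd j (fun y => u y t i) x| ≤ C)
    (hA_smooth : ContDiffOn ℝ (⊤ : ℕ∞) (fun q : (Fin 3 → ℝ) × ℝ => A q.1 q.2) (univ ×ˢ Icc 0 T))
    (hA_pde : ∀ (x : Fin 3 → ℝ), ∀ t ∈ Ioo (0 : ℝ) T, ∀ i : Fin 3,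
      deriv (fun s => A x s i) t
        + (∑ k, u x t k * pd k (fun y => A y t i) x)
        - ν * lap (fun y => A y t i) x = 0)
    (hA_init : ∀ x, A x 0 = x)
    (hA2_bdd : ∃ C : ℝ, ∀ (x : Fin 3 → ℝ), ∀ t ∈ Icc (0 : ℝ) T, ∀ i j k : Fin 3,
      |pd j (fun y => pd k (fun z => A z t i) y) x| ≤ C)
    (hQ_smooth : ∀ i j : Fin 3,
      ContDiffOn ℝ (⊤ : ℕ∞) (fun q : (Fin 3 → ℝ) × ℝ => Q q.1 q.2 i j) (univ ×ˢ Icc 0 T))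
    (hQ_bdd : ∃ C : ℝ, ∀ (x : Fin 3 → ℝ), ∀ t ∈ Icc (0 : ℝ) T, ∀ i j k : Fin 3,
      |Q x t i j| ≤ C ∧ |pd k (fun y => Q y t i j) x| ≤ C)
    (hQ_init : ∀ x, Q x 0 = 1)
    (hQ_pde : ∀ (x : Fin 3 → ℝ), ∀ t ∈ Ioo (0 : ℝ) T, ∀ i j : Fin 3,
      deriv (fun s => Q x s i j) t
        + (∑ k, u x t k * pd k (fun y => Q y t i j) x)
        - ν * lap (fun y => Q y t i j) x
      = ((Matrix.of (fun i' j' => pd j' (fun y => u y t i') x) * Q x t) i j)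
        + 2 * ν * ∑ k : Fin 3,
            ((Q x t
              * Matrix.of (fun l m => pd k (fun y => pd m (fun z => A z t l) y) x)
              * Matrix.of (fun m j' => pd k (fun y => Q y t m j') x)) i j)) :
    ∀ (x : Fin 3 → ℝ), ∀ t ∈ Icc (0 : ℝ) T,
      jacMat (fun y => A y t) x * Q x t = 1 := by
  obtain ⟨Cu, hCu⟩ := hu_bdd
  obtain ⟨CA, hCA⟩ := hA2_bdd
  obtain ⟨CQ, hCQ⟩ := hQ_bdd
  have hu_s : ∀ k, SmoothOnStrip T fun x t => u x t k := fun k => contDiffOn_pi.1 hu_smooth k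
  have hA_s : ∀ i, SmoothOnStrip T fun x t => A x t i := fun i => contDiffOn_pi.1 hA_smooth i
  have hQ_s : ∀ i j, SmoothOnStrip T fun x t => Q x t i j := hQ_smooth
  have hM_s : ∀ i j, SmoothOnStrip T fun x t => jacMat (fun y => A y t) x i j :=
    fun i j => (hA_s i).pd hT j
  set Z : (Fin 3 → ℝ) → ℝ → Matrix (Fin 3) (Fin 3) ℝ :=
    fun x t => jacMat (fun y => A y t) x * Q x t - 1 with hZ
  have hZ_eq : ∀ i j, (fun x t => Z x t i j) = fun x t =>
      (∑ l, jacMat (fun y => A y t) x i l * Q x t l j) + -(1 : Matrix (Fin 3) (Fin 3) ℝ) i j := by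
    intro i j
    funext x t
    simp [hZ, Matrix.mul_apply, sub_eq_add_neg]
  have hMQ_s : ∀ i j l, SmoothOnStrip T fun x t => jacMat (fun y => A y t) x i l * Q x t l j :=
    fun i j l => (hM_s i l).mul (hQ_s l j)
  have hZ_s : ∀ i j, SmoothOnStrip T fun x t => Z x t i j := by
    intro i j
    rw [hZ_eq]
    exact (SmoothOnStrip.sum (hMQ_s i j)).add (.const _)
  set B : (Fin 3 → ℝ) → ℝ → Matrix (Fin 3) (Fin 3) ℝ := fun x t =>
    (2 * ν) • ∑ k : Fin 3, Matrix.of (fun l m => pd k (fun y => pd m (fun z => A z t l) y) x)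
      * Matrix.of (fun m j' => pd k (fun y => Q y t m j') x) with hB
  have hB_bdd : ∀ x, ∀ t ∈ Ioo 0 T, ∀ i j, |B x t i j| ≤ 18 * ν * (CA * CQ) := by
    intro x t ht i j
    have ht' := Ioo_subset_Icc_self ht
    have hterm : ∀ k m, |pd k (fun y => pd m (fun z => A z t i) y) x * pd k (fun y => Q y t m j) x|
        ≤ CA * CQ := by
      intro k m
      rw [abs_mul]
      exact mul_le_mul (hCA x t ht' i k m) (hCQ x t ht' m j k).2 (abs_nonneg _)
        ((abs_nonneg _).trans (hCA x t ht' i k m))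
    have hsum : |∑ k : Fin 3, ∑ m : Fin 3, pd k (fun y => pd m (fun z => A z t i) y) x
        * pd k (fun y => Q y t m j) x| ≤ 9 * (CA * CQ) := by
      calc _ ≤ ∑ _k : Fin 3, ∑ _m : Fin 3, CA * CQ :=
            (Finset.abs_sum_le_sum_abs _ _).trans <| Finset.sum_le_sum fun k _ =>
              (Finset.abs_sum_le_sum_abs _ _).trans <| Finset.sum_le_sum fun m _ => hterm k m
        _ = 9 * (CA * CQ) := by
            simp only [Finset.sum_const, Finset.card_univ, Fintype.card_fin, nsmul_eq_mul]
            push_cast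
            ring
    simp only [hB, Matrix.smul_apply, Matrix.sum_apply, Matrix.mul_apply, Matrix.of_apply,
      smul_eq_mul]
    rw [abs_mul, abs_of_pos (by positivity : 0 < 2 * ν)]
    nlinarith
  have hM_growth : ∃ m, 0 ≤ m ∧ ∀ x, ∀ t ∈ Icc 0 T, ∀ i j,
      |jacMat (fun y => A y t) x i j| ≤ m * (1 + ‖x‖) := by
    choose m hm using fun i j => (hM_s i j).exists_abs_le_of_abs_pd_le
      fun x t ht k => hCA x t ht i k j
    refine ⟨∑ i, ∑ j, |m i j|, by positivity, fun x t ht i j => (hm i j x t ht).trans ?_⟩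
    refine mul_le_mul_of_nonneg_right ((le_abs_self _).trans ?_) (by positivity)
    exact (Finset.single_le_sum (f := fun j => |m i j|) (fun j _ => abs_nonneg _)
      (Finset.mem_univ j)).trans
      (Finset.single_le_sum (f := fun i => ∑ j, |m i j|)
        (fun i _ => Finset.sum_nonneg fun j _ => abs_nonneg _) (Finset.mem_univ i))
  obtain ⟨m, hm0, hm⟩ := hM_growth
  have hZ_growth : ∀ x, ∀ t ∈ Icc 0 T, ∀ i j, |Z x t i j| ≤ (3 * m * CQ + 1) * (1 + ‖x‖) := by
    intro x t ht i j
    have h1 : |∑ l, jacMat (fun y => A y t) x i l * Q x t l j| ≤ 3 * (m * (1 + ‖x‖) * CQ) := by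
      calc _ ≤ ∑ _l : Fin 3, m * (1 + ‖x‖) * CQ :=
            (Finset.abs_sum_le_sum_abs _ _).trans <| Finset.sum_le_sum fun l _ => by
              rw [abs_mul]
              exact mul_le_mul (hm x t ht i l) (hCQ x t ht l j 0).1 (abs_nonneg _) (by positivity)
        _ = _ := by simp
    have h2 : |-(1 : Matrix (Fin 3) (Fin 3) ℝ) i j| ≤ 1 := by
      rw [abs_neg, Matrix.one_apply]
      split_ifs <;> simp
    have h3 := abs_add_le (∑ l, jacMat (fun y => A y t) x i l * Q x t l j)
      (-(1 : Matrix (Fin 3) (Fin 3) ℝ) i j)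
    rw [← congrFun (congrFun (hZ_eq i j) x) t] at h3
    nlinarith [norm_nonneg x]
  have hZ_init : ∀ x, Z x 0 = 0 := by
    intro x
    ext i j
    simp only [hZ, hQ_init, hA_init, mul_one, Matrix.sub_apply, jacMat, pd_coord, Matrix.one_apply,
      sub_self, Matrix.zero_apply]
  have hZ_pde : ∀ x, ∀ t ∈ Ioo 0 T, ∀ i j,
      parab ν u (fun y s => Z y s i j) x t = (Z x t * B x t) i j := by
    intro x t ht i j
    set M := jacMat (fun y => A y t) x with hM
    set U : Matrix (Fin 3) (Fin 3) ℝ := Matrix.of fun i' j' => pd j' (fun y => u y t i') x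
    set P : Fin 3 → Matrix (Fin 3) (Fin 3) ℝ := fun k =>
      Matrix.of fun l m => pd k (fun y => pd m (fun z => A z t l) y) x
    set R : Fin 3 → Matrix (Fin 3) (Fin 3) ℝ := fun k =>
      Matrix.of fun m j' => pd k (fun y => Q y t m j') x
    have hΓM : ∀ l, parab ν u (fun y s => jacMat (fun z => A z s) y i l) x t = -(M * U) i l := by
      intro l
      rw [Matrix.mul_apply]
      exact parab_pd_of_parab_eq_zero hu_s (hA_s i) ht (fun y => hA_pde y t ht i) l x
    have hΓQ : ∀ l, parab ν u (fun y s => Q y s l j) x t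
        = (U * Q x t + (2 * ν) • ∑ k, Q x t * P k * R k) l j := by
      intro l
      rw [Matrix.add_apply, Matrix.smul_apply, Matrix.sum_apply, smul_eq_mul]
      exact hQ_pde x t ht l j
    have hcross : ∀ l, ∑ k, pd k (fun y => jacMat (fun z => A z t) y i l) x
        * pd k (fun y => Q y t l j) x = ∑ k, P k i l * R k l j := fun l => rfl
    have hmat : -(M * U) * Q x t + M * (U * Q x t + (2 * ν) • ∑ k, Q x t * P k * R k)
        - (2 * ν) • ∑ k, P k * R k = Z x t * B x t := by
      have hBxt : B x t = (2 * ν) • ∑ k, P k * R k := rfl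
      have hZxt : Z x t = M * Q x t - 1 := rfl
      rw [hBxt, hZxt]
      simp only [Finset.mul_sum, smul_sub, Finset.smul_sum, Matrix.mul_smul, Matrix.mul_add,
        Matrix.neg_mul, Matrix.sub_mul, Matrix.one_mul, Matrix.mul_assoc, Finset.sum_sub_distrib]
      abel
    rw [hZ_eq, parab_add (SmoothOnStrip.sum (hMQ_s i j)) (.const _) ht, parab_const, add_zero,
      parab_sum (hMQ_s i j) ht, ← hmat]
    simp only [parab_mul (hM_s i _) (hQ_s _ j) ht, hΓM, hΓQ, hcross]
    rw [Matrix.sub_apply, Matrix.add_apply, Matrix.smul_apply, Matrix.sum_apply,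
      Matrix.mul_apply, Matrix.mul_apply, smul_eq_mul]
    simp only [Matrix.mul_apply (M := P _), Matrix.neg_apply, Finset.sum_sub_distrib,
      Finset.sum_add_distrib, ← Finset.mul_sum]
    rw [Finset.sum_comm (f := fun k l => P k i l * R k l j)]
  intro x t ht
  exact sub_eq_zero.1 (eq_zero_of_parab_eq_mul hν.le hT
    (fun x t ht i => (hCu x t (Ioo_subset_Icc_self ht) i 0).1)
    hZ_s hZ_growth hZ_init hB_bdd hZ_pde x ht)
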